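/- Let (X_i)_{i≥1} be i.i.d. standard normal random variables, X_{(n)} = max_{1≤i≤n} X_i, and Y_n = a_n(X_{(n)} - b_n) with a_n = √(2 log n) and b_n = √(2 log n) - (log log n + log(4π))/(2√(2 log n)). Then sup_{x∈ℝ} |P(Y_n ≤ x) - exp(-e^{-x})| = ((log log n)²/(16 e log n))(1 + o(1)) as n → ∞, i.e. the ratio of the left-hand side to (log log n)²/(16 e log n) tends to 1. -/

import Mathlib

open MeasureTheory Filter Real

/-- The standard normal cumulative distribution function. -/
noncomputable def stdNormalCDF (x : ℝ) : ℝ :=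
  ∫ t in Set.Iic x, Real.exp (-t ^ 2 / 2) / Real.sqrt (2 * Real.pi)

/-- Scaling constant `a_n = √(2 log n)`. -/
noncomputable def aSeq (n : ℕ) : ℝ := Real.sqrt (2 * Real.log n)

/-- Centering constant
`b_n = √(2 log n) - (log log n + log (4π)) / (2 √(2 log n))`. -/
noncomputable def bSeq (n : ℕ) : ℝ :=
  aSeq n - (Real.log (Real.log n) + Real.log (4 * Real.pi)) / (2 * aSeq n)

/-- The CDF of `Y_n = a_n (X_{(n)} - b_n)` where `X_{(n)}` is the maximum of `n`
i.i.d. standard normal random variables: `P(Y_n ≤ x) = Φ(b_n + x/a_n)^n`. -/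
noncomputable def Fmax (n : ℕ) (x : ℝ) : ℝ := stdNormalCDF (bSeq n + x / aSeq n) ^ n

/-!
With `L = log n` and `Λ` the Gumbel distribution function, `P(Y_n ≤ x) = Λ (x + c_n x)` for a shift
`c_n x`. Mills' ratio `1 - Φ(u) = φ(u) / u * (1 + O(1 / u ^ 2))` gives
`c_n x = L * w ^ 2 + log (1 + w) + O(1 / L)`, where `b_n + x / a_n = a_n * (1 + w)` and
`w = (x - (log L + log (4 * π)) / 2) / (2 * L)`. Hence
`c_n x = (log L) ^ 2 / (16 * L) + O((1 + |x|) * log L / L)` for `|x| ≤ log L`. Since `Λ' ≤ 1 / e`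
with equality at `0`, the main term contributes `(log L) ^ 2 / (16 * e * L)`, and the error is
uniformly negligible because `(1 + |x|) * Λ' x` is bounded. Where `|x| > log L`, monotonicity of
both functions reduces the estimate to the points `±log L`, where `Λ` is within `1 / L` of its
limits.
-/

open ProbabilityTheory Asymptotics Set
open scoped Topology NNReal

section KolmogorovDistance

variable {α : Type*} [LinearOrder α] {F G : α → ℝ} {a b : α} {D ε : ℝ}

lemma abs_sub_le_of_abs_sub_le_on_Icc (hF : Monotone F) (hG : Monotone G)
    (hF01 : ∀ x, F x ∈ Icc 0 1) (hG01 : ∀ x, G x ∈ Icc 0 1) (hab : a ≤ b)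
    (hD : ∀ x ∈ Icc a b, |F x - G x| ≤ D) (ha : G a ≤ ε) (hb : 1 - G b ≤ ε) (x : α) :
    |F x - G x| ≤ D + ε := by
  have hDa := abs_le.1 (hD a (left_mem_Icc.2 hab))
  have hDb := abs_le.1 (hD b (right_mem_Icc.2 hab))
  obtain ⟨hFx0, hFx1⟩ := hF01 x
  obtain ⟨hGx0, hGx1⟩ := hG01 x
  rcases lt_or_ge x a with hxa | hax
  · have hFxa := hF hxa.le
    have hGxa := hG hxa.le
    rw [abs_le]
    constructor <;> linarith
  rcases le_or_gt x b with hxb | hbx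
  · have hε : 0 ≤ ε := (hG01 a).1.trans ha
    linarith [hD x ⟨hax, hxb⟩]
  · have hFbx := hF hbx.le
    have hGbx := hG hbx.le
    rw [abs_le]
    constructor <;> linarith

end KolmogorovDistance

section Gumbel

/-- The cumulative distribution function `Λ` of the standard Gumbel distribution. -/
noncomputable def gumbelCDF (x : ℝ) : ℝ := exp (-exp (-x))

/-- The density `Λ'` of the standard Gumbel distribution. -/
noncomputable def gumbelPDF (x : ℝ) : ℝ := exp (-x) * gumbelCDF x

/-- The inverse of `gumbelCDF` on `(0, 1)`; elsewhere its values are meaningless. For a distribution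
function `F`, the number `gumbelQuantile (F x) - x` is the amount by which the argument of `Λ` has
to be shifted at `x` to obtain `F x`. -/
noncomputable def gumbelQuantile (p : ℝ) : ℝ := -log (-log p)

lemma gumbelCDF_gumbelQuantile {p : ℝ} (hp : p ∈ Ioo 0 1) : gumbelCDF (gumbelQuantile p) = p := by
  have hlog : 0 < -log p := neg_pos.2 (log_neg hp.1 hp.2)
  rw [gumbelCDF, gumbelQuantile, neg_neg, exp_log hlog, neg_neg, exp_log hp.1]

lemma gumbelPDF_nonneg (x : ℝ) : 0 ≤ gumbelPDF x := by
  unfold gumbelPDF gumbelCDF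
  positivity

lemma hasDerivAt_gumbelCDF (x : ℝ) : HasDerivAt gumbelCDF (gumbelPDF x) x :=
  (hasDerivAt_neg x).exp.neg.exp.congr_deriv (by
    rw [gumbelPDF, gumbelCDF, Pi.neg_apply]; ring)

lemma monotone_gumbelCDF : Monotone gumbelCDF :=
  monotone_of_hasDerivAt_nonneg hasDerivAt_gumbelCDF gumbelPDF_nonneg

lemma gumbelCDF_mem_Icc (x : ℝ) : gumbelCDF x ∈ Icc 0 1 :=
  ⟨(exp_pos _).le, exp_le_one_iff.2 (neg_nonpos.2 (exp_pos _).le)⟩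

lemma one_sub_gumbelCDF_le (x : ℝ) : 1 - gumbelCDF x ≤ exp (-x) := by
  linarith [one_sub_le_exp_neg (exp (-x)), gumbelCDF.eq_1 x]

lemma gumbelCDF_neg_le (x : ℝ) : gumbelCDF (-x) ≤ exp (-x) := by
  rw [gumbelCDF, neg_neg, exp_le_exp, neg_le_neg_iff]
  linarith [add_one_le_exp x]

lemma gumbelPDF_le (x : ℝ) : gumbelPDF x ≤ exp (-1) :=
  mul_exp_neg_le_exp_neg_one (exp (-x))

lemma exp_neg_mul_abs_le (x : ℝ) : exp (-x) * |x| ≤ 1 + exp (-x) ^ 2 := by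
  rcases le_total 0 x with hx | hx
  · have h := mul_exp_neg_le_exp_neg_one x
    have h1 : exp (-1) ≤ 1 := exp_le_one_iff.2 (by norm_num)
    rw [abs_of_nonneg hx, mul_comm]
    linarith [sq_nonneg (exp (-x))]
  · have h : |x| ≤ exp (-x) := by
      rw [abs_of_nonpos hx]
      linarith [add_one_le_exp (-x)]
    nlinarith [exp_pos (-x)]

lemma two_add_abs_mul_gumbelPDF_le (x : ℝ) : (2 + |x|) * gumbelPDF x ≤ 2 := by
  have habs := exp_neg_mul_abs_le x
  have hquad := quadratic_le_exp_of_nonneg (exp_pos (-x)).le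
  rw [gumbelPDF, gumbelCDF, exp_neg (exp (-x)), ← mul_assoc, ← div_eq_mul_inv,
    div_le_iff₀ (exp_pos _)]
  linarith

lemma abs_gumbelCDF_sub_le (x y : ℝ) : |gumbelCDF y - gumbelCDF x| ≤ exp (-1) * |y - x| :=
  convex_univ.norm_image_sub_le_of_norm_hasDerivWithin_le
    (fun z _ => (hasDerivAt_gumbelCDF z).hasDerivWithinAt)
    (fun z _ => by rw [norm_of_nonneg (gumbelPDF_nonneg z)]; exact gumbelPDF_le z)
    (mem_univ x) (mem_univ y)

lemma abs_gumbelCDF_sub_le_of_mem_closedBall {c x y : ℝ} (hx : x ∈ Metric.closedBall c 1)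
    (hy : y ∈ Metric.closedBall c 1) :
    |gumbelCDF y - gumbelCDF x| ≤ 2 / (1 + |c|) * |y - x| := by
  refine (convex_closedBall c 1).norm_image_sub_le_of_norm_hasDerivWithin_le
    (fun z _ => (hasDerivAt_gumbelCDF z).hasDerivWithinAt) (fun z hz => ?_) hx hy
  have hcz : |c| ≤ 1 + |z| := by
    rw [mem_closedBall_iff_norm', norm_eq_abs] at hz
    linarith [abs_sub_abs_le_abs_sub c z]
  rw [norm_of_nonneg (gumbelPDF_nonneg z), le_div_iff₀ (by positivity), mul_comm]
  calc (1 + |c|) * gumbelPDF z ≤ (2 + |z|) * gumbelPDF z :=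
        mul_le_mul_of_nonneg_right (by linarith) (gumbelPDF_nonneg z)
    _ ≤ 2 := two_add_abs_mul_gumbelPDF_le z

lemma abs_gumbelCDF_sub_le_of_shift {x y δ η : ℝ} (hδ0 : 0 ≤ δ) (hδ1 : δ ≤ 1) (hyx : |y - x| ≤ 1)
    (hshift : |y - x - δ| ≤ η * (1 + |x|)) :
    |gumbelCDF y - gumbelCDF x| ≤ δ * exp (-1) + 2 * η := by
  have hfar : |gumbelCDF (x + δ) - gumbelCDF x| ≤ δ * exp (-1) := by
    have h := abs_gumbelCDF_sub_le x (x + δ)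
    rwa [add_sub_cancel_left, abs_of_nonneg hδ0, mul_comm] at h
  have hnear : |gumbelCDF y - gumbelCDF (x + δ)| ≤ 2 * η := by
    have hball : x + δ ∈ Metric.closedBall x 1 := by
      rwa [mem_closedBall_iff_norm, add_sub_cancel_left, norm_of_nonneg hδ0]
    calc |gumbelCDF y - gumbelCDF (x + δ)| ≤ 2 / (1 + |x|) * |y - (x + δ)| :=
          abs_gumbelCDF_sub_le_of_mem_closedBall hball (mem_closedBall_iff_norm.2 hyx)
      _ ≤ 2 / (1 + |x|) * (η * (1 + |x|)) := by rw [← sub_sub]; gcongr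
      _ = 2 * η := by field_simp
  calc |gumbelCDF y - gumbelCDF x|
      ≤ |gumbelCDF y - gumbelCDF (x + δ)| + |gumbelCDF (x + δ) - gumbelCDF x| :=
        abs_sub_le _ _ _
    _ ≤ δ * exp (-1) + 2 * η := by linarith

lemma abs_sub_gumbelCDF_le {F : ℝ → ℝ} {δ η ℓ : ℝ} (hF : Monotone F)
    (hF01 : ∀ x, F x ∈ Ioo 0 1) (hδ : 0 ≤ δ) (hℓ : 0 ≤ ℓ)
    (hsmall : δ + η * (1 + ℓ) ≤ 1)
    (hshift : ∀ x, |x| ≤ ℓ → |gumbelQuantile (F x) - x - δ| ≤ η * (1 + |x|)) (x : ℝ) :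
    |F x - gumbelCDF x| ≤ δ * exp (-1) + 2 * η + exp (-ℓ) := by
  have hη : 0 ≤ η := by
    simpa using (abs_nonneg _).trans (hshift 0 (by rwa [abs_zero]))
  refine abs_sub_le_of_abs_sub_le_on_Icc hF monotone_gumbelCDF
    (fun x => Ioo_subset_Icc_self (hF01 x)) gumbelCDF_mem_Icc (neg_le_self hℓ) (fun x hx => ?_)
    (gumbelCDF_neg_le ℓ) (one_sub_gumbelCDF_le ℓ) x
  have hx : |x| ≤ ℓ := abs_le.2 hx
  have hηx : η * (1 + |x|) ≤ η * (1 + ℓ) := by gcongr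
  have hqx : |gumbelQuantile (F x) - x| ≤ 1 := by
    have h := abs_le.1 (hshift x hx)
    rw [abs_le]
    constructor <;> linarith
  have hδ1 : δ ≤ 1 := by linarith [mul_nonneg hη (by linarith : 0 ≤ 1 + ℓ)]
  have h := abs_gumbelCDF_sub_le_of_shift hδ hδ1 hqx (hshift x hx)
  rwa [gumbelCDF_gumbelQuantile (hF01 x)] at h

variable {ι : Type*} {f : Filter ι}

lemma tendsto_gumbelCDF_sub_div {c δ : ι → ℝ} (hδ : Tendsto δ f (𝓝 0))
    (hδ0 : ∀ᶠ i in f, δ i ≠ 0) (hc : (fun i => c i - δ i) =o[f] δ) :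
    Tendsto (fun i => (gumbelCDF (c i) - gumbelCDF 0) / δ i) f (𝓝 (exp (-1))) := by
  have hequiv : c ~[f] δ := hc
  have hdslope : Tendsto (dslope gumbelCDF 0) (𝓝 0) (𝓝 (exp (-1))) := by
    have hderiv := hasDerivAt_gumbelCDF 0
    have h := (continuousAt_dslope_same.2 hderiv.differentiableAt).tendsto
    rwa [dslope_same, hderiv.deriv, gumbelPDF, gumbelCDF, neg_zero, exp_zero, one_mul] at h
  have hprod := (isEquivalent_iff_tendsto_one hδ0).1 hequiv |>.mul
    (hdslope.comp (hequiv.symm.tendsto_nhds hδ))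
  rw [one_mul] at hprod
  refine hprod.congr fun i => ?_
  have h := sub_smul_dslope gumbelCDF 0 (c i)
  rw [sub_zero, smul_eq_mul] at h
  rw [← h]
  exact div_mul_eq_mul_div _ _ _

-- The supremum is attained asymptotically at `0`, the mode of the Gumbel density, where `Λ' = 1/e`.
theorem tendsto_iSup_abs_sub_gumbelCDF_div {F : ι → ℝ → ℝ} {δ η ℓ : ι → ℝ}
    (hF : ∀ᶠ i in f, Monotone (F i)) (hF01 : ∀ᶠ i in f, ∀ x, F i x ∈ Ioo 0 1)
    (hshift : ∀ᶠ i in f, ∀ x, |x| ≤ ℓ i →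
      |gumbelQuantile (F i x) - x - δ i| ≤ η i * (1 + |x|))
    (hδ0 : ∀ᶠ i in f, 0 < δ i) (hδ : Tendsto δ f (𝓝 0)) (hη : η =o[f] δ)
    (hηℓ : Tendsto (fun i => η i * ℓ i) f (𝓝 0)) (hℓ : (fun i => exp (-ℓ i)) =o[f] δ) :
    Tendsto (fun i => (⨆ x, |F i x - gumbelCDF x|) / δ i) f (𝓝 (exp (-1))) := by
  have hℓ0 : ∀ᶠ i in f, 0 ≤ ℓ i := by
    filter_upwards [(hℓ.trans_tendsto hδ).eventually (Iic_mem_nhds one_pos)] with i hi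
    exact neg_nonpos.1 (exp_le_one_iff.1 hi)
  have hshift0 : ∀ᶠ i in f, |gumbelQuantile (F i 0) - δ i| ≤ η i := by
    filter_upwards [hshift, hℓ0] with i hi hℓi
    simpa using hi 0 (by rwa [abs_zero])
  have hsmall : ∀ᶠ i in f, δ i + η i * (1 + ℓ i) ≤ 1 := by
    have h := hδ.add ((hη.trans_tendsto hδ).add hηℓ)
    rw [add_zero, add_zero] at h
    filter_upwards [h.eventually (Iic_mem_nhds one_pos)] with i hi
    rwa [mul_add, mul_one]
  have hupper : ∀ᶠ i in f, ∀ x,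
      |F i x - gumbelCDF x| ≤ δ i * exp (-1) + 2 * η i + exp (-ℓ i) := by
    filter_upwards [hF, hF01, hshift, hδ0, hℓ0, hsmall] with i hF hF01 hi hδ hℓ hsmall
    exact abs_sub_gumbelCDF_le hF hF01 hδ.le hℓ hsmall hi
  have hlower : Tendsto (fun i => (gumbelCDF (gumbelQuantile (F i 0)) - gumbelCDF 0) / δ i) f
      (𝓝 (exp (-1))) :=
    tendsto_gumbelCDF_sub_div hδ (hδ0.mono fun _ h => h.ne') <|
      (IsBigO.of_bound' (hshift0.mono fun _ h => h.trans (le_abs_self _))).trans_isLittleO hη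
  have hbound : Tendsto (fun i => exp (-1) + 2 * (η i / δ i) + exp (-ℓ i) / δ i) f
      (𝓝 (exp (-1))) := by
    simpa using
      ((hη.tendsto_div_nhds_zero.const_mul 2).const_add (exp (-1))).add hℓ.tendsto_div_nhds_zero
  refine tendsto_of_tendsto_of_tendsto_of_le_of_le' hlower hbound ?_ ?_
  · filter_upwards [hupper, hδ0, hF01] with i hi hδi hFi
    rw [gumbelCDF_gumbelQuantile (hFi 0)]
    have hbdd : BddAbove (range fun x => |F i x - gumbelCDF x|) := ⟨_, forall_mem_range.2 hi⟩
    gcongr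
    exact (le_abs_self _).trans (le_ciSup hbdd 0)
  · filter_upwards [hupper, hδ0] with i hi hδi
    rw [div_le_iff₀ hδi]
    refine (ciSup_le hi).trans_eq ?_
    field_simp

end Gumbel

section GaussianTail

instance isOpenPosMeasure_gaussianReal (μ : ℝ) (v : ℝ≥0) [NeZero v] :
    (gaussianReal μ v).IsOpenPosMeasure :=
  (gaussianReal_absolutelyContinuous' μ (NeZero.ne v)).isOpenPosMeasure

lemma cdf_mem_Ioo (μ : Measure ℝ) [IsProbabilityMeasure μ] [μ.IsOpenPosMeasure] (x : ℝ) :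
    cdf μ x ∈ Ioo 0 1 := by
  have hlow : 0 < μ.real (Iic x) :=
    ENNReal.toReal_pos ((isOpen_Iio.measure_pos μ nonempty_Iio).trans_le
      (measure_mono Iio_subset_Iic_self)).ne' (measure_ne_top μ _)
  have hhigh : 0 < μ.real (Iic x)ᶜ := by
    rw [compl_Iic]
    exact ENNReal.toReal_pos (isOpen_Ioi.measure_pos μ nonempty_Ioi).ne' (measure_ne_top μ _)
  rw [probReal_compl_eq_one_sub measurableSet_Iic, sub_pos] at hhigh
  rw [cdf_eq_real]
  exact ⟨hlow, hhigh⟩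

lemma hasDerivAt_gaussianPDFReal (μ : ℝ) (v : ℝ≥0) (x : ℝ) :
    HasDerivAt (gaussianPDFReal μ v) (-(x - μ) / v * gaussianPDFReal μ v x) x := by
  have hexponent : HasDerivAt (fun x => -(x - μ) ^ 2 / (2 * v)) (-(x - μ) / v) x :=
    ((((hasDerivAt_id x).sub_const μ).pow 2).neg.div_const (2 * (v : ℝ))).congr_deriv (by
      simp only [id]; ring)
  exact (hexponent.exp.const_mul _).congr_deriv (by rw [gaussianPDFReal]; ring)

lemma gaussianPDFReal_le (μ : ℝ) (v : ℝ≥0) (x : ℝ) :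
    gaussianPDFReal μ v x ≤ (√(2 * π * v))⁻¹ :=
  mul_le_of_le_one_right (by positivity) (exp_le_one_iff.2 (by
    rw [neg_div]; exact neg_nonpos.2 (by positivity)))

lemma stdNormalCDF_eq_integral_gaussianPDFReal (u : ℝ) :
    stdNormalCDF u = ∫ t in Iic u, gaussianPDFReal 0 1 t := by
  refine setIntegral_congr_fun measurableSet_Iic fun t _ => ?_
  simp only [gaussianPDFReal, sub_zero, NNReal.coe_one, mul_one]
  exact div_eq_inv_mul _ _

lemma stdNormalCDF_eq_cdf : stdNormalCDF = cdf (gaussianReal 0 1) := by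
  ext u
  rw [stdNormalCDF_eq_integral_gaussianPDFReal, cdf_eq_real, Measure.real,
    gaussianReal_apply_eq_integral 0 one_ne_zero, ENNReal.toReal_ofReal]
  exact integral_nonneg (gaussianPDFReal_nonneg 0 1)

lemma monotone_stdNormalCDF : Monotone stdNormalCDF :=
  stdNormalCDF_eq_cdf ▸ monotone_cdf _

lemma stdNormalCDF_mem_Ioo (u : ℝ) : stdNormalCDF u ∈ Ioo 0 1 :=
  stdNormalCDF_eq_cdf ▸ cdf_mem_Ioo _ u

lemma one_sub_stdNormalCDF (u : ℝ) :
    1 - stdNormalCDF u = ∫ t in Ioi u, gaussianPDFReal 0 1 t := by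
  have hint := integrable_gaussianPDFReal 0 1
  rw [stdNormalCDF_eq_integral_gaussianPDFReal, sub_eq_iff_eq_add',
    intervalIntegral.integral_Iic_add_Ioi hint.integrableOn hint.integrableOn,
    integral_gaussianPDFReal_eq_one 0 one_ne_zero]

lemma hasDerivAt_neg_gaussianPDFReal_div {t : ℝ} (ht : t ≠ 0) :
    HasDerivAt (fun t => -(gaussianPDFReal 0 1 t / t))
      (gaussianPDFReal 0 1 t * (1 + 1 / t ^ 2)) t := by
  refine ((hasDerivAt_gaussianPDFReal 0 1 t).div (hasDerivAt_id t) ht).neg.congr_deriv ?_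
  simp only [id, sub_zero, NNReal.coe_one]
  field_simp
  ring

lemma tendsto_neg_gaussianPDFReal_div_atTop :
    Tendsto (fun t => -(gaussianPDFReal 0 1 t / t)) atTop (𝓝 0) := by
  suffices h : Tendsto (fun t => gaussianPDFReal 0 1 t / t) atTop (𝓝 0) by simpa using h.neg
  refine squeeze_zero' ?_ ?_ (tendsto_id.const_div_atTop (√(2 * π * (1 : ℝ≥0)))⁻¹)
  · filter_upwards [eventually_ge_atTop 0] with t ht
    exact div_nonneg (gaussianPDFReal_nonneg 0 1 t) ht
  · filter_upwards [eventually_ge_atTop 0] with t ht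
    exact div_le_div_of_nonneg_right (gaussianPDFReal_le 0 1 t) ht

variable {u : ℝ}

lemma integrableOn_gaussianPDFReal_mul_Ioi (hu : 0 < u) :
    IntegrableOn (fun t => gaussianPDFReal 0 1 t * (1 + 1 / t ^ 2)) (Ioi u) :=
  integrableOn_Ioi_deriv_of_nonneg'
    (fun _ ht => hasDerivAt_neg_gaussianPDFReal_div (hu.trans_le ht).ne')
    (fun t _ => mul_nonneg (gaussianPDFReal_nonneg 0 1 t) (by positivity))
    tendsto_neg_gaussianPDFReal_div_atTop

lemma integral_Ioi_gaussianPDFReal_mul (hu : 0 < u) :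
    ∫ t in Ioi u, gaussianPDFReal 0 1 t * (1 + 1 / t ^ 2) = gaussianPDFReal 0 1 u / u := by
  rw [integral_Ioi_of_hasDerivAt_of_nonneg'
    (fun _ ht => hasDerivAt_neg_gaussianPDFReal_div (hu.trans_le ht).ne')
    (fun t _ => mul_nonneg (gaussianPDFReal_nonneg 0 1 t) (by positivity))
    tendsto_neg_gaussianPDFReal_div_atTop]
  ring

lemma one_sub_stdNormalCDF_le (hu : 0 < u) :
    1 - stdNormalCDF u ≤ gaussianPDFReal 0 1 u / u := by
  rw [one_sub_stdNormalCDF, ← integral_Ioi_gaussianPDFReal_mul hu]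
  refine setIntegral_mono_on (integrable_gaussianPDFReal 0 1).integrableOn
    (integrableOn_gaussianPDFReal_mul_Ioi hu) measurableSet_Ioi fun t _ => ?_
  exact le_mul_of_one_le_right (gaussianPDFReal_nonneg 0 1 t)
    (le_add_of_nonneg_right (by positivity))

lemma gaussianPDFReal_div_le (hu : 0 < u) :
    gaussianPDFReal 0 1 u / u ≤ (1 - stdNormalCDF u) * (1 + 1 / u ^ 2) := by
  rw [one_sub_stdNormalCDF, ← integral_mul_const, ← integral_Ioi_gaussianPDFReal_mul hu]
  refine setIntegral_mono_on (integrableOn_gaussianPDFReal_mul_Ioi hu)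
    ((integrable_gaussianPDFReal 0 1).mul_const _).integrableOn measurableSet_Ioi fun t ht => ?_
  have htu : u < t := ht
  gcongr
  exact gaussianPDFReal_nonneg 0 1 t

/-- `-log (φ(u) / u)`, where `φ` is the standard normal density: the leading term of
`-log (1 - Φ(u))` for large `u`. -/
noncomputable def tailExponent (u : ℝ) : ℝ := u ^ 2 / 2 + log u + log (2 * π) / 2

lemma log_gaussianPDFReal_div (hu : 0 < u) :
    log (gaussianPDFReal 0 1 u / u) = -tailExponent u := by
  rw [gaussianPDFReal, log_div (by positivity) hu.ne', log_mul (by positivity) (by positivity),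
    log_exp, log_inv, NNReal.coe_one, mul_one, log_sqrt (by positivity), tailExponent]
  ring

lemma log_one_sub_stdNormalCDF_mem_Icc (hu : 0 < u) :
    log (1 - stdNormalCDF u) ∈ Icc (-tailExponent u - 1 / u ^ 2) (-tailExponent u) := by
  have hpdf : 0 < gaussianPDFReal 0 1 u / u :=
    div_pos (gaussianPDFReal_pos 0 1 u one_ne_zero) hu
  have htail : 0 < 1 - stdNormalCDF u := sub_pos.2 (stdNormalCDF_mem_Ioo u).2
  have hinv : 0 < 1 + 1 / u ^ 2 := by positivity
  rw [← log_gaussianPDFReal_div hu]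
  constructor
  · have h := log_le_log hpdf (gaussianPDFReal_div_le hu)
    rw [log_mul htail.ne' hinv.ne'] at h
    linarith [log_le_sub_one_of_pos hinv]
  · exact log_le_log htail (one_sub_stdNormalCDF_le hu)

lemma one_sub_stdNormalCDF_le_inv_sq (hu : 2 ≤ u) : 1 - stdNormalCDF u ≤ 1 / (2 * u ^ 2) := by
  have hexp : exp (-u ^ 2 / 2) ≤ 2 / u ^ 2 := by
    rw [neg_div, exp_neg, ← inv_div (u ^ 2)]
    exact inv_anti₀ (half_pos (pow_pos (by linarith) 2)) (by linarith [add_one_le_exp (u ^ 2 / 2)])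
  have hsqrt : 2 ≤ √(2 * π) := le_sqrt_of_sq_le (by nlinarith [pi_gt_three])
  have hpdf : gaussianPDFReal 0 1 u ≤ 1 / u ^ 2 := by
    simp only [gaussianPDFReal, sub_zero, NNReal.coe_one, mul_one]
    calc (√(2 * π))⁻¹ * exp (-u ^ 2 / 2) ≤ 2⁻¹ * (2 / u ^ 2) := by gcongr
      _ = 1 / u ^ 2 := by ring
  calc 1 - stdNormalCDF u ≤ gaussianPDFReal 0 1 u / u := one_sub_stdNormalCDF_le (by linarith)
    _ ≤ 1 / u ^ 2 / 2 := by gcongr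
    _ = 1 / (2 * u ^ 2) := by rw [div_div, mul_comm]

lemma log_neg_log_one_sub_mem_Icc {q : ℝ} (hq0 : 0 < q) (hq : q ≤ 1 / 2) :
    log (-log (1 - q)) ∈ Icc (log q) (log q + 2 * q) := by
  have hq1 : 0 < 1 - q := by linarith
  have hlow : q ≤ -log (1 - q) := by linarith [log_le_sub_one_of_pos hq1]
  have hhigh : -log (1 - q) ≤ q / (1 - q) := by
    have hinv : q / (1 - q) = (1 - q)⁻¹ - 1 := by field_simp; ring
    linarith [one_sub_inv_le_log_of_pos hq1]
  have hdiv : q / (1 - q) ≤ 2 * q := by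
    rw [div_le_iff₀ hq1]
    nlinarith
  refine ⟨log_le_log hq0 hlow, ?_⟩
  calc log (-log (1 - q)) ≤ log (q / (1 - q)) := log_le_log (hq0.trans_le hlow) hhigh
    _ = log q + -log (1 - q) := log_div hq0.ne' hq1.ne'
    _ ≤ log q + 2 * q := by linarith

lemma abs_gumbelQuantile_stdNormalCDF_pow_sub_le {n : ℕ} (hn : n ≠ 0) (hu : 2 ≤ u) :
    |gumbelQuantile (stdNormalCDF u ^ n) - (tailExponent u - log n)| ≤ 1 / u ^ 2 := by
  have htail0 : 0 < 1 - stdNormalCDF u := sub_pos.2 (stdNormalCDF_mem_Ioo u).2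
  have htail := one_sub_stdNormalCDF_le_inv_sq hu
  have hinv : 1 / (2 * u ^ 2) = 1 / u ^ 2 / 2 := by rw [div_div, mul_comm]
  have hinv1 : 1 / u ^ 2 ≤ 1 := by
    rw [div_le_one (by positivity)]
    nlinarith
  have hlog := log_one_sub_stdNormalCDF_mem_Icc (by linarith : 0 < u)
  have hloglog := log_neg_log_one_sub_mem_Icc htail0 (by linarith)
  rw [sub_sub_cancel] at hloglog
  have hneg : -log (stdNormalCDF u) ≠ 0 :=
    (neg_pos.2 (log_neg (stdNormalCDF_mem_Ioo u).1 (stdNormalCDF_mem_Ioo u).2)).ne'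
  have hquantile : gumbelQuantile (stdNormalCDF u ^ n) =
      -log n - log (-log (stdNormalCDF u)) := by
    rw [gumbelQuantile, log_pow, ← mul_neg, log_mul (Nat.cast_ne_zero.2 hn) hneg]
    ring
  obtain ⟨hlog1, hlog2⟩ := hlog
  obtain ⟨hloglog1, hloglog2⟩ := hloglog
  rw [hquantile, abs_le]
  constructor <;> linarith

end GaussianTail

section GaussianMaximum

/-- The number `w` for which the affine normalization `x ↦ b + x / a` with
`a = √(2 L)`, `b = a - (log L + log (4 π)) / (2 a)` sends `x` to `a (1 + w)`; here `L` stands for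
`log n`. -/
noncomputable def relativeOffset (L x : ℝ) : ℝ := (x - (log L + log (4 * π)) / 2) / (2 * L)

lemma bSeq_add_div_aSeq {n : ℕ} (hn : 0 < log n) (x : ℝ) :
    bSeq n + x / aSeq n = aSeq n * (1 + relativeOffset (log n) x) := by
  have ha : 0 < aSeq n := sqrt_pos.2 (by positivity)
  have ha2 : 2 * log n = aSeq n ^ 2 := (sq_sqrt (by positivity)).symm
  rw [bSeq, relativeOffset, ha2]
  field_simp
  ring

lemma tailExponent_sqrt_mul {L w : ℝ} (hL : 0 < L) (hw : 0 < 1 + w) :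
    tailExponent (√(2 * L) * (1 + w)) =
      L * (1 + w) ^ 2 + log (1 + w) + (log L + log (4 * π)) / 2 := by
  have hlog : log (2 * L) + log (2 * π) = log L + log (4 * π) := by
    rw [← log_mul (by positivity) (by positivity), ← log_mul (by positivity) (by positivity)]
    ring_nf
  rw [tailExponent, mul_pow, sq_sqrt (by positivity), log_mul (by positivity) hw.ne',
    log_sqrt (by positivity)]
  linarith

lemma tailExponent_sqrt_mul_relativeOffset {L x : ℝ} (hL : 0 < L)
    (hw : 0 < 1 + relativeOffset L x) :
    tailExponent (√(2 * L) * (1 + relativeOffset L x)) - L =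
      x + L * relativeOffset L x ^ 2 + log (1 + relativeOffset L x) := by
  have hlin : 2 * L * relativeOffset L x = x - (log L + log (4 * π)) / 2 := by
    rw [relativeOffset]
    field_simp
  rw [tailExponent_sqrt_mul hL hw]
  linarith

lemma abs_log_one_add_le {w : ℝ} (hw : |w| ≤ 1 / 2) : |log (1 + w)| ≤ 2 * |w| := by
  have hpos : 0 < 1 + w := by linarith [neg_le_of_abs_le hw]
  have hlow : 1 - (1 + w)⁻¹ = w / (1 + w) := by field_simp; ring
  have hdiv : -(2 * |w|) ≤ w / (1 + w) := by
    rw [le_div_iff₀ hpos]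
    nlinarith [neg_abs_le w, abs_nonneg w]
  rw [abs_le]
  constructor
  · linarith [one_sub_inv_le_log_of_pos hpos]
  · linarith [log_le_sub_one_of_pos hpos, le_abs_self w, abs_nonneg w]

lemma one_lt_log_four_mul_pi : 1 < log (4 * π) := by
  rw [lt_log_iff_exp_lt (by positivity)]
  linarith [pi_gt_three, exp_one_lt_d9]

variable {L x : ℝ}

lemma abs_relativeOffset_le (hL : 4 * π ≤ L) (hx : |x| ≤ log L) :
    |relativeOffset L x| ≤ log L / L := by
  have hL0 : 0 < L := by linarith [pi_pos]
  have hκ := one_lt_log_four_mul_pi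
  have hκL : log (4 * π) ≤ log L := log_le_log (by positivity) hL
  have hnum : |x - (log L + log (4 * π)) / 2| ≤ 2 * log L := by
    obtain ⟨hx1, hx2⟩ := abs_le.1 hx
    rw [abs_le]
    constructor <;> linarith
  rw [relativeOffset, abs_div, abs_of_pos (by positivity : 0 < 2 * L)]
  calc |x - (log L + log (4 * π)) / 2| / (2 * L) ≤ 2 * log L / (2 * L) := by gcongr
    _ = log L / L := mul_div_mul_left _ _ two_ne_zero

lemma abs_mul_relativeOffset_sq_sub_le (hL : 4 * π ≤ L) (hx : |x| ≤ log L) :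
    |L * relativeOffset L x ^ 2 - log L ^ 2 / (16 * L)| ≤
      (1 + log (4 * π)) * (log L / L) * (1 + |x|) := by
  have hL0 : 0 < L := by linarith [pi_pos]
  have hκ := one_lt_log_four_mul_pi
  have hκL : log (4 * π) ≤ log L := log_le_log (by positivity) hL
  have hfactor : L * relativeOffset L x ^ 2 - log L ^ 2 / (16 * L) =
      (x - log L - log (4 * π) / 2) * (x - log (4 * π) / 2) / (4 * L) := by
    rw [relativeOffset]
    field_simp
    ring
  obtain ⟨hx1, hx2⟩ := abs_le.1 hx
  have hleft : |x - log L - log (4 * π) / 2| ≤ 4 * log L := by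
    rw [abs_le]
    constructor <;> linarith
  have hright : |x - log (4 * π) / 2| ≤ (1 + log (4 * π)) * (1 + |x|) := by
    have h := mul_nonneg (by linarith : 0 ≤ log (4 * π)) (abs_nonneg x)
    rw [abs_le]
    constructor <;> linarith [le_abs_self x, neg_abs_le x]
  have hlog : 0 < log L := by linarith
  rw [hfactor, abs_div, abs_mul, abs_of_pos (by positivity : 0 < 4 * L)]
  calc |x - log L - log (4 * π) / 2| * |x - log (4 * π) / 2| / (4 * L)
      ≤ 4 * log L * ((1 + log (4 * π)) * (1 + |x|)) / (4 * L) := by gcongr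
    _ = (1 + log (4 * π)) * (log L / L) * (1 + |x|) := by field_simp

lemma half_le_sq_sqrt_mul_one_add {w : ℝ} (hL : 0 ≤ L) (hw : |w| ≤ 1 / 2) :
    L / 2 ≤ (√(2 * L) * (1 + w)) ^ 2 := by
  calc L / 2 = 2 * L * (1 / 2) ^ 2 := by ring
    _ ≤ 2 * L * (1 + w) ^ 2 := by gcongr; linarith [neg_le_of_abs_le hw]
    _ = (√(2 * L) * (1 + w)) ^ 2 := by rw [mul_pow, sq_sqrt (by positivity)]

lemma log_div_self_le_half (hL : 0 < L) : log L / L ≤ 1 / 2 := by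
  rw [div_le_iff₀ hL]
  have h := two_mul_le_exp (x := log L)
  rw [exp_log hL] at h
  linarith

lemma monotone_Fmax (n : ℕ) : Monotone (Fmax n) := by
  intro x y hxy
  have ha : 0 ≤ aSeq n := sqrt_nonneg _
  refine pow_le_pow_left₀ (stdNormalCDF_mem_Ioo _).1.le (monotone_stdNormalCDF ?_) n
  exact add_le_add_right (div_le_div_of_nonneg_right hxy ha) _

variable {n : ℕ}

lemma Fmax_mem_Ioo (hn : n ≠ 0) (x : ℝ) : Fmax n x ∈ Ioo 0 1 := by
  obtain ⟨h0, h1⟩ := stdNormalCDF_mem_Ioo (bSeq n + x / aSeq n)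
  exact ⟨pow_pos h0 n, pow_lt_one₀ h0.le h1 hn⟩

lemma abs_gumbelQuantile_Fmax_sub_le (hn : 4 * π ≤ log n) (hx : |x| ≤ log (log n)) :
    |gumbelQuantile (Fmax n x) - x - log (log n) ^ 2 / (16 * log n)| ≤
      (5 + log (4 * π)) * (log (log n) / log n) * (1 + |x|) := by
  have hπ := pi_gt_three
  have hL : 0 < log n := by linarith
  have hn0 : n ≠ 0 := by
    rintro rfl
    simp at hL
  have hℓ : 1 ≤ log (log n) := one_lt_log_four_mul_pi.le.trans (log_le_log (by positivity) hn)
  set w := relativeOffset (log n) x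
  have hwℓ : |w| ≤ log (log n) / log n := abs_relativeOffset_le hn hx
  have hw : |w| ≤ 1 / 2 := hwℓ.trans (log_div_self_le_half hL)
  have hw0 : 0 < 1 + w := by linarith [neg_le_of_abs_le hw]
  set u := √(2 * log n) * (1 + w)
  have hFmax : Fmax n x = stdNormalCDF u ^ n := by rw [Fmax, bSeq_add_div_aSeq hL, aSeq]
  have husq : log n / 2 ≤ u ^ 2 := half_le_sq_sqrt_mul_one_add hL.le hw
  have hu : 2 ≤ u := (sq_le_sq₀ two_pos.le (by positivity)).1 (by linarith)
  have hinv : 1 / u ^ 2 ≤ 2 * (log (log n) / log n) :=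
    calc 1 / u ^ 2 ≤ 1 / (log n / 2) := by gcongr
      _ = 2 * (1 / log n) := by ring
      _ ≤ 2 * (log (log n) / log n) := by gcongr
  have hquantile := abs_gumbelQuantile_stdNormalCDF_pow_sub_le hn0 hu
  have hexponent : tailExponent u - log n = x + log n * w ^ 2 + log (1 + w) :=
    tailExponent_sqrt_mul_relativeOffset hL hw0
  have hsq := abs_mul_relativeOffset_sq_sub_le hn hx
  have hlog := abs_log_one_add_le hw
  rw [hFmax]
  rw [hexponent] at hquantile
  set δ := log (log n) ^ 2 / (16 * log n)
  calc |gumbelQuantile (stdNormalCDF u ^ n) - x - δ|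
      = |(gumbelQuantile (stdNormalCDF u ^ n) - (x + log n * w ^ 2 + log (1 + w))) +
          (log n * w ^ 2 - δ) + log (1 + w)| := by ring_nf
    _ ≤ _ := abs_add_three _ _ _
    _ ≤ 4 * (log (log n) / log n) +
          (1 + log (4 * π)) * (log (log n) / log n) * (1 + |x|) := by linarith
    _ ≤ 4 * (log (log n) / log n) * (1 + |x|) +
          (1 + log (4 * π)) * (log (log n) / log n) * (1 + |x|) := by
      have h1x : 1 ≤ 1 + |x| := le_add_of_nonneg_right (abs_nonneg x)
      linarith [le_mul_of_one_le_right (by positivity : 0 ≤ 4 * (log (log n) / log n)) h1x]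
    _ = (5 + log (4 * π)) * (log (log n) / log n) * (1 + |x|) := by ring

end GaussianMaximum

section Limit

lemma isLittleO_log_pow_div {j k : ℕ} (hjk : j < k) :
    (fun L : ℝ => log L ^ j / L) =o[atTop] fun L => log L ^ k / L := by
  simp only [div_eq_mul_inv]
  exact ((isLittleO_pow_pow_atTop_of_lt hjk).comp_tendsto tendsto_log_atTop).mul_isBigO
    (isBigO_refl _ _)

lemma tendsto_log_pow_div_atTop (k : ℕ) :
    Tendsto (fun L : ℝ => log L ^ k / L) atTop (𝓝 0) :=
  isLittleO_pow_log_id_atTop.tendsto_div_nhds_zero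

theorem tendsto_iSup_abs_Fmax_sub_gumbelCDF_div :
    Tendsto (fun n : ℕ => (⨆ x, |Fmax n x - gumbelCDF x|) /
      (log (log n) ^ 2 / (16 * log n))) atTop (𝓝 (exp (-1))) := by
  have hL : Tendsto (fun n : ℕ => log n) atTop atTop :=
    tendsto_log_atTop.comp tendsto_natCast_atTop_atTop
  have hℓ : Tendsto (fun n : ℕ => log (log n)) atTop atTop := tendsto_log_atTop.comp hL
  have hlogsq : Tendsto (fun n : ℕ => log (log n) ^ 2 / log n) atTop (𝓝 0) :=
    (tendsto_log_pow_div_atTop 2).comp hL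
  have hδ (n : ℕ) : 16⁻¹ * (log (log n) ^ 2 / log n) = log (log n) ^ 2 / (16 * log n) := by
    rw [← div_div, div_right_comm, inv_mul_eq_div]
  have hlittleO {j : ℕ} (hj : j < 2) : (fun n : ℕ => log (log n) ^ j / log n) =o[atTop]
      fun n : ℕ => log (log n) ^ 2 / (16 * log n) := by
    simp only [← hδ]
    exact ((isLittleO_log_pow_div hj).comp_tendsto hL).const_mul_right (by norm_num)
  refine tendsto_iSup_abs_sub_gumbelCDF_div
    (η := fun n => (5 + log (4 * π)) * (log (log n) / log n)) (ℓ := fun n => log (log n))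
    (.of_forall monotone_Fmax) ((eventually_ne_atTop 0).mono fun _ => Fmax_mem_Ioo)
    ((hL.eventually_ge_atTop (4 * π)).mono fun _ hn _ => abs_gumbelQuantile_Fmax_sub_le hn)
    ?_ ?_ ?_ ?_ ?_
  · filter_upwards [hL.eventually_gt_atTop 0, hℓ.eventually_gt_atTop 0] with n hn hℓn
    positivity
  · simpa only [← hδ, mul_zero] using hlogsq.const_mul 16⁻¹
  · simpa only [pow_one] using (hlittleO one_lt_two).const_mul_left (5 + log (4 * π))
  · simpa only [mul_zero, mul_assoc, sq, div_mul_eq_mul_div] using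
      hlogsq.const_mul (5 + log (4 * π))
  · refine (hlittleO two_pos).congr' ?_ .rfl
    filter_upwards [hL.eventually_gt_atTop 0] with n hn
    rw [pow_zero, exp_neg, exp_log hn, one_div]

end Limit

/-- Berry–Esseen type bound: the Kolmogorov distance between the law of the normalized
maximum of `n` i.i.d. standard normals and the standard Gumbel distribution is
`(log log n)² / (16 e log n) · (1 + o(1))`. -/
theorem berryEsseen_gumbel_max_gaussian :
    Tendsto (fun n : ℕ =>
        (⨆ x : ℝ, |Fmax n x - Real.exp (-Real.exp (-x))|) /
          ((Real.log (Real.log n)) ^ 2 / (16 * Real.exp 1 * Real.log n)))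
      atTop (nhds 1) := by
  have h := tendsto_iSup_abs_Fmax_sub_gumbelCDF_div.mul_const (exp 1)
  rw [← exp_add, neg_add_cancel, exp_zero] at h
  refine h.congr fun n => ?_
  rw [mul_right_comm 16 (exp 1), ← div_div _ _ (exp 1), div_div_eq_mul_div _ _ (exp 1),
    mul_div_right_comm]
  rfl
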